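/- Let λ = √((5+√13)/2). Then the 3×3 complex matrix with rows s₁ = (−1/√3, √(λ²−2)/(2λ) − i·(λ²−3)/(2λ), 1/√(λ²−2)), s₂ = ((λ²−3)/√3, 0, 1/√(λ²−2)), s₃ = (−√((λ²−4)/3), −(λ²−2)/(2√3) + i·√(λ²−3)/2, √((λ²−4)/(λ²−2))) is unitary (its rows form an orthonormal basis of ℂ³ with respect to the standard Hermitian inner product). -/

import Mathlib

namespace AsaedaHaagerupStmt9

noncomputable def lam : ℝ := Real.sqrt ((5 + Real.sqrt 13) / 2)

noncomputable def U : Matrix (Fin 3) (Fin 3) ℂ :=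
  !![Complex.ofReal (-(1 / Real.sqrt 3)),
       Complex.ofReal (Real.sqrt (lam ^ 2 - 2) / (2 * lam)) -
         Complex.ofReal ((lam ^ 2 - 3) / (2 * lam)) * Complex.I,
       Complex.ofReal (1 / Real.sqrt (lam ^ 2 - 2));
     Complex.ofReal ((lam ^ 2 - 3) / Real.sqrt 3), 0,
       Complex.ofReal (1 / Real.sqrt (lam ^ 2 - 2));
     Complex.ofReal (-Real.sqrt ((lam ^ 2 - 4) / 3)),
       Complex.ofReal (-((lam ^ 2 - 2) / (2 * Real.sqrt 3))) +
         Complex.ofReal (Real.sqrt (lam ^ 2 - 3) / 2) * Complex.I,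
       Complex.ofReal (Real.sqrt ((lam ^ 2 - 4) / (lam ^ 2 - 2)))]

/-!
With `μ = λ²`, the quartic for `λ` says `(μ - 2)(μ - 3) = 3`, so that `1 / (μ - 2) = (μ - 3) / 3`.
Together with `μ (μ - 2) (μ - 4) = 3` it also determines the square roots of `μ - 3` and `μ - 4`
from those of `3`, `μ` and `μ - 2`. Only the middle column is not real, and its products
`U i 1 * star (U j 1)` are real nevertheless; hence each Hermitian inner product of two rows is a
real sum that the relation `1 / (μ - 2) = (μ - 3) / 3` evaluates.
-/

theorem mem_unitaryGroup_iff_rows {n R : Type*} [Fintype n] [LinearOrder n] [CommRing R]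
    [StarRing R] {A : Matrix n n R} :
    A ∈ Matrix.unitaryGroup n R ↔
      (∀ i, A.row i ⬝ᵥ star (A.row i) = 1) ∧ ∀ i j, i < j → A.row i ⬝ᵥ star (A.row j) = 0 := by
  have entry (i j : n) : (A * star A) i j = A.row i ⬝ᵥ star (A.row j) := rfl
  rw [Matrix.mem_unitaryGroup_iff, ← Matrix.ext_iff]
  simp only [entry]
  refine ⟨fun h => ⟨fun i => by rw [h, Matrix.one_apply_eq],
    fun i j hij => by rw [h, Matrix.one_apply_ne hij.ne]⟩, fun ⟨norm_eq, orthogonal⟩ i j => ?_⟩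
  rcases lt_trichotomy i j with hij | rfl | hji
  · rw [orthogonal i j hij, Matrix.one_apply_ne hij.ne]
  · rw [norm_eq, Matrix.one_apply_eq]
  · rw [Matrix.dotProduct_star, orthogonal j i hji, star_zero, Matrix.one_apply_ne hji.ne']

theorem div_sqrt_mul_div_sqrt {a : ℝ} (ha : 0 ≤ a) (x y : ℝ) :
    x / √a * (y / √a) = x * y / a := by
  rw [div_mul_div_comm, Real.mul_self_sqrt ha]

theorem lam_pos : 0 < lam := by unfold lam; positivity

theorem lam_sq : lam ^ 2 = (5 + √13) / 2 := Real.sq_sqrt (by positivity)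

theorem four_lt_lam_sq : 4 < lam ^ 2 := by
  have : 3 < √13 := Real.lt_sqrt_of_sq_lt (by norm_num)
  linarith [lam_sq]

theorem lam_sq_sub_two_pos : 0 < lam ^ 2 - 2 := by linarith [four_lt_lam_sq]

theorem lam_sq_sub_two_mul_lam_sq_sub_three : (lam ^ 2 - 2) * (lam ^ 2 - 3) = 3 := by
  have : √13 ^ 2 = 13 := Real.sq_sqrt (by norm_num)
  rw [lam_sq]
  linear_combination this / 4

theorem one_div_lam_sq_sub_two : 1 / (lam ^ 2 - 2) = (lam ^ 2 - 3) / 3 := by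
  rw [div_eq_div_iff lam_sq_sub_two_pos.ne' three_ne_zero, one_mul, mul_comm,
    lam_sq_sub_two_mul_lam_sq_sub_three]

theorem sqrt_lam_sq_sub_two_pos : 0 < √(lam ^ 2 - 2) :=
  Real.sqrt_pos.mpr lam_sq_sub_two_pos

theorem sq_sqrt_lam_sq_sub_two : √(lam ^ 2 - 2) ^ 2 = lam ^ 2 - 2 :=
  Real.sq_sqrt lam_sq_sub_two_pos.le

theorem sqrt_lam_sq_sub_three : √(lam ^ 2 - 3) = √3 / √(lam ^ 2 - 2) := by
  rw [eq_div_iff sqrt_lam_sq_sub_two_pos.ne', mul_comm, ← Real.sqrt_mul lam_sq_sub_two_pos.le,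
    lam_sq_sub_two_mul_lam_sq_sub_three]

theorem sqrt_lam_sq_sub_four : √(lam ^ 2 - 4) = √3 / (lam * √(lam ^ 2 - 2)) := by
  have product : lam ^ 2 * (lam ^ 2 - 2) * (lam ^ 2 - 4) = 3 := by
    linear_combination (lam ^ 2 - 1) * lam_sq_sub_two_mul_lam_sq_sub_three
  have nonneg : 0 ≤ lam ^ 2 * (lam ^ 2 - 2) := mul_nonneg (sq_nonneg _) lam_sq_sub_two_pos.le
  rw [eq_div_iff (mul_pos lam_pos sqrt_lam_sq_sub_two_pos).ne', mul_comm]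
  calc lam * √(lam ^ 2 - 2) * √(lam ^ 2 - 4)
      = √(lam ^ 2) * √(lam ^ 2 - 2) * √(lam ^ 2 - 4) := by rw [Real.sqrt_sq lam_pos.le]
    _ = √(lam ^ 2 * (lam ^ 2 - 2) * (lam ^ 2 - 4)) := by
        rw [Real.sqrt_mul nonneg, Real.sqrt_mul (sq_nonneg _)]
    _ = √3 := by rw [product]

theorem U_zero_one :
    U 0 1 = ⟨√(lam ^ 2 - 2) / (2 * lam), -((lam ^ 2 - 3) / (2 * lam))⟩ := by
  apply Complex.ext <;> simp [U, -Complex.ofReal_div]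

theorem U_two_one :
    U 2 1 = ⟨-((lam ^ 2 - 2) / (2 * √3)), √(lam ^ 2 - 3) / 2⟩ := by
  apply Complex.ext <;> simp [U, -Complex.ofReal_div]

theorem U_zero_one_mul_star_self : U 0 1 * star (U 0 1) = ((1 / lam ^ 2 : ℝ) : ℂ) := by
  have := lam_pos.ne'
  rw [Complex.star_def, Complex.mul_conj, U_zero_one, Complex.normSq_mk]
  congr 1
  field_simp
  linear_combination sq_sqrt_lam_sq_sub_two + lam_sq_sub_two_mul_lam_sq_sub_three

theorem U_two_one_mul_star_self : U 2 1 * star (U 2 1) = (((lam ^ 2 - 2) / 3 : ℝ) : ℂ) := by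
  have sq_sqrt_lam_sq_sub_three : √(lam ^ 2 - 3) ^ 2 = lam ^ 2 - 3 :=
    Real.sq_sqrt (by linarith [four_lt_lam_sq])
  rw [Complex.star_def, Complex.mul_conj, U_two_one, Complex.normSq_mk]
  congr 1
  field_simp
  rw [sq_sqrt_lam_sq_sub_three, Real.sq_sqrt zero_le_three]
  linear_combination 3 * lam_sq_sub_two_mul_lam_sq_sub_three

theorem U_zero_one_mul_star_two_one :
    U 0 1 * star (U 2 1) = ((-(√(lam ^ 2 - 4) * (lam ^ 2 - 2) / 3) : ℝ) : ℂ) := by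
  have lam_ne := lam_pos.ne'
  have sqrt_ne := sqrt_lam_sq_sub_two_pos.ne'
  rw [U_zero_one, U_two_one, sqrt_lam_sq_sub_three, sqrt_lam_sq_sub_four]
  apply Complex.ext
  · simp only [Complex.star_def, Complex.mul_re, Complex.conj_re, Complex.conj_im,
      Complex.ofReal_re]
    field_simp
    rw [Real.sq_sqrt zero_le_three, sq_sqrt_lam_sq_sub_two]
    linear_combination (-3) * lam_sq_sub_two_mul_lam_sq_sub_three
  · simp only [Complex.star_def, Complex.mul_im, Complex.conj_re, Complex.conj_im,
      Complex.ofReal_im]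
    field_simp
    rw [Real.sq_sqrt zero_le_three]
    linear_combination lam_sq_sub_two_mul_lam_sq_sub_three

theorem U_row_dotProduct_star_row {i j : Fin 3} {c : ℝ} (hc : U i 1 * star (U j 1) = c) :
    U.row i ⬝ᵥ star (U.row j) =
      (((U i 0).re * (U j 0).re + c + (U i 2).re * (U j 2).re : ℝ) : ℂ) := by
  have col_zero (k : Fin 3) : U k 0 = ((U k 0).re : ℂ) := by fin_cases k <;> rfl
  have col_two (k : Fin 3) : U k 2 = ((U k 2).re : ℂ) := by fin_cases k <;> rfl
  have real_mul_star (z w : ℂ) : (z.re : ℂ) * star (w.re : ℂ) = ((z.re * w.re : ℝ) : ℂ) := by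
    rw [Complex.star_def, Complex.conj_ofReal, Complex.ofReal_mul]
  calc U.row i ⬝ᵥ star (U.row j)
      = U i 0 * star (U j 0) + U i 1 * star (U j 1) + U i 2 * star (U j 2) :=
        Fin.sum_univ_three _
    _ = ((U i 0).re * (U j 0).re : ℝ) + c + ((U i 2).re * (U j 2).re : ℝ) := by
        rw [hc, col_zero i, col_zero j, col_two i, col_two j, real_mul_star, real_mul_star]
        rfl
    _ = ((U i 0).re * (U j 0).re + c + (U i 2).re * (U j 2).re : ℝ) := by
        rw [Complex.ofReal_add, Complex.ofReal_add]

theorem U_one_one_mul_star (z : ℂ) : U 1 1 * star z = ((0 : ℝ) : ℂ) := by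
  simp [U]

theorem U_mul_star_one_one (z : ℂ) : z * star (U 1 1) = ((0 : ℝ) : ℂ) := by
  simp [U]

theorem U_row_zero_dotProduct_star_self : U.row 0 ⬝ᵥ star (U.row 0) = 1 := by
  have lam_ne := lam_pos.ne'
  rw [U_row_dotProduct_star_row U_zero_one_mul_star_self, Complex.ofReal_eq_one]
  calc -(1 / √3) * -(1 / √3) + 1 / lam ^ 2 + 1 / √(lam ^ 2 - 2) * (1 / √(lam ^ 2 - 2))
      = 1 / 3 + 1 / lam ^ 2 + 1 / (lam ^ 2 - 2) := by
        rw [neg_mul_neg, div_sqrt_mul_div_sqrt zero_le_three,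
          div_sqrt_mul_div_sqrt lam_sq_sub_two_pos.le, one_mul]
    _ = 1 / 3 + 1 / lam ^ 2 + (lam ^ 2 - 3) / 3 := by rw [one_div_lam_sq_sub_two]
    _ = 1 := by
        field_simp
        linear_combination lam_sq_sub_two_mul_lam_sq_sub_three

theorem U_row_one_dotProduct_star_self : U.row 1 ⬝ᵥ star (U.row 1) = 1 := by
  rw [U_row_dotProduct_star_row (U_one_one_mul_star _), Complex.ofReal_eq_one]
  calc (lam ^ 2 - 3) / √3 * ((lam ^ 2 - 3) / √3) + 0 +
        1 / √(lam ^ 2 - 2) * (1 / √(lam ^ 2 - 2))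
      = (lam ^ 2 - 3) * (lam ^ 2 - 3) / 3 + 1 / (lam ^ 2 - 2) := by
        rw [div_sqrt_mul_div_sqrt zero_le_three,
          div_sqrt_mul_div_sqrt lam_sq_sub_two_pos.le, one_mul, add_zero]
    _ = (lam ^ 2 - 2) * (lam ^ 2 - 3) / 3 := by
        rw [one_div_lam_sq_sub_two]
        ring
    _ = 1 := by rw [lam_sq_sub_two_mul_lam_sq_sub_three, div_self three_ne_zero]

theorem U_row_two_dotProduct_star_self : U.row 2 ⬝ᵥ star (U.row 2) = 1 := by
  have nonneg : 0 ≤ lam ^ 2 - 4 := by linarith [four_lt_lam_sq]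
  have quotient_nonneg : 0 ≤ (lam ^ 2 - 4) / (lam ^ 2 - 2) :=
    div_nonneg nonneg lam_sq_sub_two_pos.le
  rw [U_row_dotProduct_star_row U_two_one_mul_star_self, Complex.ofReal_eq_one]
  calc -√((lam ^ 2 - 4) / 3) * -√((lam ^ 2 - 4) / 3) + (lam ^ 2 - 2) / 3 +
        √((lam ^ 2 - 4) / (lam ^ 2 - 2)) * √((lam ^ 2 - 4) / (lam ^ 2 - 2))
      = (lam ^ 2 - 4) / 3 + (lam ^ 2 - 2) / 3 + (lam ^ 2 - 4) * (1 / (lam ^ 2 - 2)) := by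
        rw [neg_mul_neg, Real.mul_self_sqrt (by positivity), Real.mul_self_sqrt quotient_nonneg,
          mul_one_div]
    _ = (lam ^ 2 - 2) * (lam ^ 2 - 3) / 3 := by
        rw [one_div_lam_sq_sub_two]
        ring
    _ = 1 := by rw [lam_sq_sub_two_mul_lam_sq_sub_three, div_self three_ne_zero]

theorem U_row_zero_dotProduct_star_row_one : U.row 0 ⬝ᵥ star (U.row 1) = 0 := by
  rw [U_row_dotProduct_star_row (U_mul_star_one_one _), Complex.ofReal_eq_zero]
  calc -(1 / √3) * ((lam ^ 2 - 3) / √3) + 0 + 1 / √(lam ^ 2 - 2) * (1 / √(lam ^ 2 - 2))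
      = -((lam ^ 2 - 3) / 3) + 1 / (lam ^ 2 - 2) := by
        rw [neg_mul, div_sqrt_mul_div_sqrt zero_le_three,
          div_sqrt_mul_div_sqrt lam_sq_sub_two_pos.le, one_mul, one_mul, add_zero]
    _ = 0 := by rw [one_div_lam_sq_sub_two, neg_add_cancel]

theorem U_row_zero_dotProduct_star_row_two : U.row 0 ⬝ᵥ star (U.row 2) = 0 := by
  rw [U_row_dotProduct_star_row U_zero_one_mul_star_two_one, Complex.ofReal_eq_zero]
  calc -(1 / √3) * -√((lam ^ 2 - 4) / 3) + -(√(lam ^ 2 - 4) * (lam ^ 2 - 2) / 3) +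
        1 / √(lam ^ 2 - 2) * √((lam ^ 2 - 4) / (lam ^ 2 - 2))
      = √(lam ^ 2 - 4) * (1 / 3 - (lam ^ 2 - 2) / 3 + 1 / (lam ^ 2 - 2)) := by
        rw [neg_mul_neg, Real.sqrt_div' _ zero_le_three, Real.sqrt_div' _ lam_sq_sub_two_pos.le,
          div_sqrt_mul_div_sqrt zero_le_three, div_sqrt_mul_div_sqrt lam_sq_sub_two_pos.le]
        ring
    _ = 0 := by
        rw [one_div_lam_sq_sub_two]
        ring

theorem U_row_one_dotProduct_star_row_two : U.row 1 ⬝ᵥ star (U.row 2) = 0 := by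
  rw [U_row_dotProduct_star_row (U_one_one_mul_star _), Complex.ofReal_eq_zero]
  calc (lam ^ 2 - 3) / √3 * -√((lam ^ 2 - 4) / 3) + 0 +
        1 / √(lam ^ 2 - 2) * √((lam ^ 2 - 4) / (lam ^ 2 - 2))
      = √(lam ^ 2 - 4) * (1 / (lam ^ 2 - 2) - (lam ^ 2 - 3) / 3) := by
        rw [mul_neg, Real.sqrt_div' _ zero_le_three, Real.sqrt_div' _ lam_sq_sub_two_pos.le,
          div_sqrt_mul_div_sqrt zero_le_three, div_sqrt_mul_div_sqrt lam_sq_sub_two_pos.le]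
        ring
    _ = 0 := by rw [one_div_lam_sq_sub_two, sub_self, mul_zero]

theorem asaeda_haagerup_stmt9 : U ∈ Matrix.unitaryGroup (Fin 3) ℂ := by
  refine mem_unitaryGroup_iff_rows.mpr ⟨fun i => ?_, fun i j hij => ?_⟩
  · fin_cases i
    · exact U_row_zero_dotProduct_star_self
    · exact U_row_one_dotProduct_star_self
    · exact U_row_two_dotProduct_star_self
  · have pairs : (i = 0 ∧ j = 1) ∨ (i = 0 ∧ j = 2) ∨ (i = 1 ∧ j = 2) := by lia
    rcases pairs with ⟨rfl, rfl⟩ | ⟨rfl, rfl⟩ | ⟨rfl, rfl⟩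
    · exact U_row_zero_dotProduct_star_row_one
    · exact U_row_zero_dotProduct_star_row_two
    · exact U_row_one_dotProduct_star_row_two

end AsaedaHaagerupStmt9
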